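/- Let c be in the Tehranchi space 𝕔, differentiable on (0, ∞), and let k ≥ 0 satisfy c(k) > 0 and c'(k) < 0. Then the function 𝕌_k c defined by (𝕌_k c)(m) = c(k - (c(k)/c'(k))·m)/c(k) belongs to 𝕔 (it is convex with (1 - m)₊ ≤ (𝕌_k c)(m) ≤ 1 for all m ≥ 0), and its right derivative at 0 equals -1: (d/dm)(𝕌_k c)(0⁺) = -1. -/

import Mathlib

/-- The Tehranchi space: convex functions `c` with `(1 - m)₊ ≤ c m ≤ 1` for `m ≥ 0`. -/
def TehranchiSpace (c : ℝ → ℝ) : Prop :=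
  ConvexOn ℝ (Set.Ici 0) c ∧ ∀ m : ℝ, 0 ≤ m → max (1 - m) 0 ≤ c m ∧ c m ≤ 1

/-!
On `[k, ∞)` the graph of `c` is rescaled affinely in both coordinates so that the value at the left
endpoint becomes `1` and the right derivative there becomes `-1`. Convexity, monotonicity and
nonnegativity survive the rescaling. The upper bound `1` is then monotonicity, and the lower bound
`1 - m` is the supporting line at `0`. Monotonicity of `c` itself holds because a convex function
that increases somewhere lies above an increasing secant line to the right, hence is unbounded.
-/

open Set

theorem antitoneOn_Ici_of_convexOn_of_bddAbove {𝕜 : Type*} [Field 𝕜] [LinearOrder 𝕜]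
    [IsStrictOrderedRing 𝕜] {f : 𝕜 → 𝕜} {a : 𝕜} (hf : ConvexOn 𝕜 (Ici a) f)
    (hb : BddAbove (f '' Ici a)) : AntitoneOn f (Ici a) := by
  intro x hx y hy hxy
  rcases hxy.eq_or_lt with rfl | hxy
  · exact le_rfl
  by_contra! hlt
  obtain ⟨M, hM⟩ := hb
  have le_M {z : 𝕜} (hz : a ≤ z) : f z ≤ M := hM (mem_image_of_mem f hz)
  set s := (f y - f x) / (y - x)
  have hs : 0 < s := div_pos (sub_pos.2 hlt) (sub_pos.2 hxy)
  have above_secant {z : 𝕜} (hyz : y < z) : s * (z - y) ≤ f z - f y :=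
    (le_div_iff₀ (sub_pos.2 hyz)).1 (hf.slope_mono_adjacent hx (le_trans hy hyz.le) hxy hyz)
  -- The secant line through `x` and `y` reaches the height `M + 1` at `y + t`.
  set t := (M + 1 - f y) / s with ht
  have ht_pos : 0 < t := div_pos (by linarith [le_M hy]) hs
  have h_exceeds : M + 1 - f y ≤ f (y + t) - f y := by
    simpa [ht, mul_div_cancel₀ _ hs.ne'] using above_secant (lt_add_of_pos_right y ht_pos)
  linarith [le_M (le_add_of_le_of_nonneg hy ht_pos.le)]

theorem add_mul_sub_le_of_convexOn_of_hasDerivWithinAt_Ici {f : ℝ → ℝ} {f' x y : ℝ}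
    (hf : ConvexOn ℝ (Ici x) f) (hf' : HasDerivWithinAt f f' (Ici x) x) (hxy : x ≤ y) :
    f x + f' * (y - x) ≤ f y := by
  rcases hxy.eq_or_lt with rfl | hxy
  · simp
  have h_slope := hf.le_slope_of_hasDerivWithinAt self_mem_Ici hxy.le hxy hf'
  rw [slope_def_field, le_div_iff₀ (sub_pos.2 hxy)] at h_slope
  linarith

namespace TehranchiSpace

variable {c : ℝ → ℝ}

theorem nonneg (hc : TehranchiSpace c) {m : ℝ} (hm : 0 ≤ m) : 0 ≤ c m :=
  (le_max_right _ _).trans (hc.2 m hm).1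

theorem antitoneOn (hc : TehranchiSpace c) : AntitoneOn c (Ici 0) :=
  antitoneOn_Ici_of_convexOn_of_bddAbove hc.1 ⟨1, forall_mem_image.2 fun m hm => (hc.2 m hm).2⟩

theorem of_hasDerivWithinAt {c' : ℝ} (hconv : ConvexOn ℝ (Ici 0) c)
    (hanti : AntitoneOn c (Ici 0)) (hnonneg : ∀ m ∈ Ici 0, 0 ≤ c m) (hzero : c 0 = 1)
    (hderiv : HasDerivWithinAt c c' (Ici 0) 0) (hc' : -1 ≤ c') : TehranchiSpace c := by
  refine ⟨hconv, fun m hm => ⟨max_le ?_ (hnonneg m hm), hzero ▸ hanti self_mem_Ici hm hm⟩⟩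
  calc
    1 - m = c 0 + -1 * (m - 0) := by rw [hzero]; ring
    _ ≤ c 0 + c' * (m - 0) := by gcongr
    _ ≤ c m := add_mul_sub_le_of_convexOn_of_hasDerivWithinAt_Ici hconv hderiv hm

end TehranchiSpace

/-- The transform `𝕌_k c`, with `g` standing for the (right) derivative `c'(k)`; it is meaningful
only for `g ≠ 0` and `c k ≠ 0`, since division by `0` returns `0`. -/
noncomputable def tehranchiTransform (c : ℝ → ℝ) (k g m : ℝ) : ℝ :=
  c (k - c k / g * m) / c k

section Transform

variable {c : ℝ → ℝ} {k g : ℝ}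

theorem tehranchiTransform_zero (hck : c k ≠ 0) : tehranchiTransform c k g 0 = 1 := by
  simp [tehranchiTransform, hck]

theorem mapsTo_sub_mul_Ici {r : ℝ} (hr : r ≤ 0) :
    MapsTo (fun m => k - r * m) (Ici 0) (Ici k) := fun m hm => by
  simpa using mul_nonpos_of_nonpos_of_nonneg hr hm

theorem tehranchiTransform_nonneg (hnonneg : ∀ x ∈ Ici k, 0 ≤ c x) (hg : g ≤ 0) :
    ∀ m ∈ Ici 0, 0 ≤ tehranchiTransform c k g m := fun _ hm =>
  have hck : 0 ≤ c k := hnonneg k self_mem_Ici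
  div_nonneg (hnonneg _ (mapsTo_sub_mul_Ici (div_nonpos_of_nonneg_of_nonpos hck hg) hm)) hck

theorem antitoneOn_tehranchiTransform (hanti : AntitoneOn c (Ici k)) (hck : 0 ≤ c k)
    (hg : g ≤ 0) : AntitoneOn (tehranchiTransform c k g) (Ici 0) := by
  have hr : c k / g ≤ 0 := div_nonpos_of_nonneg_of_nonpos hck hg
  intro x hx y hy hxy
  have h_inner : k - c k / g * x ≤ k - c k / g * y :=
    sub_le_sub_left (mul_le_mul_of_nonpos_left hxy hr) k
  exact div_le_div_of_nonneg_right
    (hanti (mapsTo_sub_mul_Ici hr hx) (mapsTo_sub_mul_Ici hr hy) h_inner) hck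

theorem convexOn_tehranchiTransform (hconv : ConvexOn ℝ (Ici k) c) (hck : 0 ≤ c k)
    (hg : g ≤ 0) : ConvexOn ℝ (Ici 0) (tehranchiTransform c k g) := by
  have h_affine : ConvexOn ℝ (Ici 0) fun m => c (k + -(c k / g) * m) :=
    ((hconv.translate_right k).comp_linearMap (LinearMap.mulLeft ℝ (-(c k / g)))).subset
      (fun m hm => by
        simpa [sub_eq_add_neg] using
          mapsTo_sub_mul_Ici (k := k) (div_nonpos_of_nonneg_of_nonpos hck hg) hm)
      (convex_Ici 0)
  refine (h_affine.smul (inv_nonneg.2 hck)).congr fun m _ => ?_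
  simp only [tehranchiTransform, smul_eq_mul, neg_mul, ← sub_eq_add_neg, inv_mul_eq_div]

theorem hasDerivWithinAt_tehranchiTransform (hderiv : HasDerivWithinAt c g (Ici k) k)
    (hck : 0 < c k) (hg : g < 0) :
    HasDerivWithinAt (tehranchiTransform c k g) (-1) (Ici 0) 0 := by
  have h_inner : HasDerivWithinAt (fun m => k - c k / g * m) (-(c k / g)) (Ici 0) 0 := by
    simpa using (((hasDerivAt_id (0 : ℝ)).const_mul (c k / g)).const_sub k).hasDerivWithinAt
  have h_outer : HasDerivWithinAt c g (Ici k) (k - c k / g * 0) := by simpa using hderiv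
  have h_chain := (h_outer.comp 0 h_inner
    (mapsTo_sub_mul_Ici (div_nonpos_of_nonneg_of_nonpos hck.le hg.le))).div_const (c k)
  have h_slope : g * -(c k / g) / c k = -1 := by field_simp [hck.ne', hg.ne]
  rwa [h_slope] at h_chain

end Transform

theorem Uk_in_Tehranchi_deriv_minus_one_general {c : ℝ → ℝ} {k g : ℝ}
    (hconv : ConvexOn ℝ (Ici k) c) (hanti : AntitoneOn c (Ici k))
    (hnonneg : ∀ x ∈ Ici k, 0 ≤ c x) (hck : 0 < c k)
    (hderiv : HasDerivWithinAt c g (Ici k) k) (hg : g < 0) :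
    TehranchiSpace (tehranchiTransform c k g) ∧
      HasDerivWithinAt (tehranchiTransform c k g) (-1) (Ici 0) 0 := by
  have h_slope := hasDerivWithinAt_tehranchiTransform hderiv hck hg
  refine ⟨.of_hasDerivWithinAt ?_ ?_ ?_ ?_ h_slope le_rfl, h_slope⟩
  · exact convexOn_tehranchiTransform hconv hck.le hg.le
  · exact antitoneOn_tehranchiTransform hanti hck.le hg.le
  · exact tehranchiTransform_nonneg hnonneg hg.le
  · exact tehranchiTransform_zero hck.ne'

/-- For `c` in the Tehranchi space, differentiable on `(0, ∞)`, and `k ≥ 0` with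
`c k > 0` and `c'(k) < 0` (`g` being the derivative of `c` at `k` from within `[0, ∞)`),
the transform `𝕌_k c : m ↦ c (k - (c k / c'(k))·m) / c k` belongs to the Tehranchi
space and its right derivative at `0` equals `-1`. -/
theorem Uk_in_Tehranchi_deriv_minus_one (c : ℝ → ℝ) (hc : TehranchiSpace c)
    (hdiff : DifferentiableOn ℝ c (Set.Ioi 0))
    (k g : ℝ) (hk : 0 ≤ k) (hck : 0 < c k)
    (hg : HasDerivWithinAt c g (Set.Ici 0) k) (hgneg : g < 0) :
    TehranchiSpace (fun m => c (k - c k / g * m) / c k) ∧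
    HasDerivWithinAt (fun m => c (k - c k / g * m) / c k) (-1) (Set.Ici 0) 0 :=
  have hsub : Ici k ⊆ Ici 0 := Ici_subset_Ici.2 hk
  Uk_in_Tehranchi_deriv_minus_one_general (hc.1.subset hsub (convex_Ici k))
    (hc.antitoneOn.mono hsub) (fun _ hx => hc.nonneg (hsub hx)) hck (hg.mono hsub) hgneg
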